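/- arXiv:2402.15284 — 3 statements merged into one kernel-verified Lean document; each statement's English description precedes it below -/
import Mathlib

section
/- (Spatiotemporal observer convergence, Theorem 2, pseudo-inverse form.) Consider the discrete-time system z_{k+1} = f(z_k), x_k = h(z_k) on ℝᵖ with output in ℝᶜ, and the observer ξ_{k+1} = a ⊙ ξ_k + B(x_k) on ℝᵐ, where a ∈ ℝᵐ has all entries aᵢ ∈ (0,1), B : ℝᶜ → ℝᵐ is linear, and ⊙ is the entrywise product. Assume T : ℝᵖ → ℝᵐ satisfies T(f(z)) = a ⊙ T(z) + B(h(z)) for all z, and assume there is a function α : ℝ → ℝ with α(0) = 0, α continuous at 0, and α monotone nondecreasing, together with a map T⁻¹ : ℝᵐ → ℝᵖ satisfying T⁻¹(T(z)) = z for all z ∈ ℝᵖ and ‖T⁻¹(ξ₁) − T⁻¹(ξ₂)‖₂ ≤ α(‖ξ₁ − ξ₂‖₂) for all ξ₁, ξ₂ ∈ ℝᵐ. Then for every initial state z₀ ∈ ℝᵖ and every initial observer state ξ₀ ∈ ℝᵐ, the estimates ẑ_k := T⁻¹(ξ_k) satisfy ‖z_k − ẑ_k‖₂ → 0 as k → ∞.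 -/
/-- Theorem 2, pseudo-inverse form: with a pseudo-inverse `T⁻¹`
whose increments are controlled by a modulus `α`, the state estimates
`ẑ_k = T⁻¹(ξ_k)` satisfy `‖z_k − ẑ_k‖₂ → 0`. -/
theorem observer_convergence_pseudo_inverse
    (p c m : ℕ)
    (f : EuclideanSpace ℝ (Fin p) → EuclideanSpace ℝ (Fin p))
    (h : EuclideanSpace ℝ (Fin p) → EuclideanSpace ℝ (Fin c))
    (a : Fin m → ℝ) (ha : ∀ i, 0 < a i ∧ a i < 1)
    (B : EuclideanSpace ℝ (Fin c) →ₗ[ℝ] EuclideanSpace ℝ (Fin m))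
    (T : EuclideanSpace ℝ (Fin p) → EuclideanSpace ℝ (Fin m))
    (hT : ∀ z, ∀ i, T (f z) i = a i * T z i + B (h z) i)
    (α : ℝ → ℝ) (hα0 : α 0 = 0) (hαcont : ContinuousAt α 0) (hαmono : Monotone α)
    (Tinv : EuclideanSpace ℝ (Fin m) → EuclideanSpace ℝ (Fin p))
    (hTinvT : ∀ z, Tinv (T z) = z)
    (hTinv : ∀ ξ₁ ξ₂ : EuclideanSpace ℝ (Fin m), ‖Tinv ξ₁ - Tinv ξ₂‖ ≤ α ‖ξ₁ - ξ₂‖)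
    (z₀ : EuclideanSpace ℝ (Fin p))
    (ξ : ℕ → EuclideanSpace ℝ (Fin m))
    (hrec : ∀ k, ∀ i, ξ (k + 1) i = a i * ξ k i + B (h (f^[k] z₀)) i) :
    Filter.Tendsto (fun k : ℕ => ‖f^[k] z₀ - Tinv (ξ k)‖) Filter.atTop (nhds 0) := by
  have key : ∀ k i, T (f^[k] z₀) i - ξ k i = a i ^ k * (T z₀ i - ξ 0 i) := by
    intro k i
    induction k with
    | zero => simp
    | succ k ih =>
      rw [Function.iterate_succ_apply', hT, hrec, pow_succ]
      linear_combination a i * ih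
  have hlim : Filter.Tendsto (fun k : ℕ => ‖T (f^[k] z₀) - ξ k‖) Filter.atTop (nhds 0) := by
    have h1 : ∀ k, ‖T (f^[k] z₀) - ξ k‖
        = Real.sqrt (∑ i, (a i ^ k * (T z₀ i - ξ 0 i)) ^ 2) := by
      intro k
      rw [EuclideanSpace.norm_eq]
      congr 1
      refine Finset.sum_congr rfl fun i _ => ?_
      rw [← key k i, Real.norm_eq_abs, sq_abs]
      rfl
    simp_rw [h1]
    have h2 : Filter.Tendsto (fun k : ℕ => ∑ i, (a i ^ k * (T z₀ i - ξ 0 i)) ^ 2)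
        Filter.atTop (nhds (∑ i : Fin m, (0 * (T z₀ i - ξ 0 i)) ^ 2)) := by
      refine tendsto_finsetSum _ fun i _ => ?_
      exact ((tendsto_pow_atTop_nhds_zero_of_lt_one (ha i).1.le (ha i).2).mul_const _).pow 2
    have h3 := (Real.continuous_sqrt.tendsto _).comp h2
    simpa [Function.comp_def] using h3
  have hα : Filter.Tendsto (fun k : ℕ => α ‖T (f^[k] z₀) - ξ k‖) Filter.atTop (nhds 0) := by
    have h4 : Filter.Tendsto α (nhds 0) (nhds 0) := by
      have h5 := hαcont.tendsto
      rwa [hα0] at h5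
    exact h4.comp hlim
  refine squeeze_zero (fun _ => norm_nonneg _) (fun k => ?_) hα
  have h6 := hTinv (T (f^[k] z₀)) (ξ k)
  rwa [hTinvT] at h6
end

section
/- (Spatiotemporal observer convergence, Theorem 2, existence form.) Consider the discrete-time system z_{k+1} = f(z_k), x_k = h(z_k) on ℝᵖ with output in ℝᶜ, and the observer ξ_{k+1} = a ⊙ ξ_k + B(x_k) on ℝᵐ, where a ∈ ℝᵐ has all entries aᵢ ∈ (0,1), B : ℝᶜ → ℝᵐ is linear, and ⊙ is the entrywise product. Assume T : ℝᵖ → ℝᵐ satisfies T(f(z)) = a ⊙ T(z) + B(h(z)) for all z, and assume T is uniformly injective with modulus α, i.e. there is α : ℝ → ℝ with α(0) = 0, α continuous at 0, α monotone nondecreasing, and α subadditive (α(s+t) ≤ α(s) + α(t) for s,t ≥ 0), such that ‖z₁ − z₂‖₂ ≤ α(‖T(z₁) − T(z₂)‖₂) for all z₁, z₂ ∈ ℝᵖ. Then there exists a map T* : ℝᵐ → ℝᵖ such that for every initial state z₀ ∈ ℝᵖ and every initial observer state ξ₀ ∈ ℝᵐ, the estimates ẑ_k := T*(ξ_k) satisfy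 ‖z_k − ẑ_k‖₂ → 0 as k → ∞. -/
/-- Theorem 2, existence form: if `T` is uniformly injective with a
modulus `α`, then there exists `T*` such that the estimates `ẑ_k = T*(ξ_k)`
converge to the true states `z_k`. -/
theorem observer_convergence_exists_Tstar
    (p c m : ℕ)
    (f : EuclideanSpace ℝ (Fin p) → EuclideanSpace ℝ (Fin p))
    (h : EuclideanSpace ℝ (Fin p) → EuclideanSpace ℝ (Fin c))
    (a : Fin m → ℝ) (ha : ∀ i, 0 < a i ∧ a i < 1)
    (B : EuclideanSpace ℝ (Fin c) →ₗ[ℝ] EuclideanSpace ℝ (Fin m))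
    (T : EuclideanSpace ℝ (Fin p) → EuclideanSpace ℝ (Fin m))
    (hT : ∀ z, ∀ i, T (f z) i = a i * T z i + B (h z) i)
    (α : ℝ → ℝ) (hα0 : α 0 = 0) (hαcont : ContinuousAt α 0) (hαmono : Monotone α)
    (hαsub : ∀ s t : ℝ, 0 ≤ s → 0 ≤ t → α (s + t) ≤ α s + α t)
    (hinj : ∀ z₁ z₂ : EuclideanSpace ℝ (Fin p), ‖z₁ - z₂‖ ≤ α ‖T z₁ - T z₂‖) :
    ∃ Tstar : EuclideanSpace ℝ (Fin m) → EuclideanSpace ℝ (Fin p),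
      ∀ z₀ : EuclideanSpace ℝ (Fin p), ∀ ξ : ℕ → EuclideanSpace ℝ (Fin m),
        (∀ k, ∀ i, ξ (k + 1) i = a i * ξ k i + B (h (f^[k] z₀)) i) →
        Filter.Tendsto (fun k : ℕ => ‖f^[k] z₀ - Tstar (ξ k)‖) Filter.atTop (nhds 0) := by
  have key : ∀ x : EuclideanSpace ℝ (Fin m), ∃ w : EuclideanSpace ℝ (Fin p),
      ∀ z, ‖z - w‖ ≤ α (2 * ‖T z - x‖) := by
    intro x
    have hne := IsCompact.inter_iInter_nonempty
      (isCompact_closedBall (0 : EuclideanSpace ℝ (Fin p)) (α (2 * ‖T 0 - x‖)))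
      (fun z => Metric.closedBall z (α (2 * ‖T z - x‖)))
      (fun z => Metric.isClosed_closedBall) (by
        classical
        intro u
        obtain ⟨j, hj, hmin⟩ := Finset.exists_min_image (insert 0 u) (fun z => ‖T z - x‖)
          (Finset.insert_nonempty _ _)
        have hb : ∀ z ∈ insert 0 u, j ∈ Metric.closedBall z (α (2 * ‖T z - x‖)) := by
          intro z hz
          rw [Metric.mem_closedBall, dist_comm, dist_eq_norm]
          refine (hinj z j).trans (hαmono ?_)
          have h1 := norm_sub_le (T z - x) (T j - x)
          have h2 := hmin z hz
          rw [sub_sub_sub_cancel_right] at h1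
          linarith
        refine ⟨j, hb 0 (Finset.mem_insert_self _ _), ?_⟩
        simp only [Set.mem_iInter]
        exact fun z hz => hb z (Finset.mem_insert_of_mem hz))
    obtain ⟨w, -, hw⟩ := hne
    refine ⟨w, fun z => ?_⟩
    have := Set.mem_iInter.1 hw z
    rwa [Metric.mem_closedBall, dist_comm, dist_eq_norm] at this
  choose S hS using key
  refine ⟨S, fun z₀ ξ hξ => ?_⟩
  have he : ∀ k i, (T (f^[k] z₀) - ξ k) i = a i ^ k * (T z₀ - ξ 0) i := by
    intro k i
    induction k with
    | zero => simp
    | succ k ih =>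
      rw [Function.iterate_succ_apply']
      simp only [PiLp.sub_apply] at ih ⊢
      rw [hT, hξ, pow_succ]
      linear_combination a i * ih
  have h0 : Filter.Tendsto (fun k => 2 * ‖T (f^[k] z₀) - ξ k‖) Filter.atTop (nhds 0) := by
    have : Filter.Tendsto (fun k => 2 * √(∑ i, ‖a i ^ k * (T z₀ - ξ 0) i‖ ^ 2))
        Filter.atTop (nhds (2 * √(∑ i : Fin m, ‖0 * (T z₀ - ξ 0) i‖ ^ 2))) := by
      refine Filter.Tendsto.const_mul _ (Filter.Tendsto.sqrt (tendsto_finsetSum _ fun i _ => ?_))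
      exact (((tendsto_pow_atTop_nhds_zero_of_lt_one (ha i).1.le (ha i).2).mul_const _).norm).pow 2
    simp only [EuclideanSpace.norm_eq, he]
    simpa using this
  have h1 : Filter.Tendsto (fun k => α (2 * ‖T (f^[k] z₀) - ξ k‖)) Filter.atTop (nhds 0) := by
    have := hαcont.tendsto.comp h0
    rwa [hα0] at this
  exact squeeze_zero (fun k => norm_nonneg _) (fun k => hS (ξ k) (f^[k] z₀)) h1
end

section
/- (McShane extension with a modulus of continuity.) Let X be a metric space, S ⊆ X a nonempty subset, and f : X → ℝ a function. Let α : ℝ → ℝ be monotone nondecreasing, subadditive on nonnegative reals (α(s+t) ≤ α(s) + α(t) for all s, t ≥ 0), with α(0) = 0, and suppose |f(x) − f(y)| ≤ α(dist(x,y)) for all x, y ∈ S. Then there exists F : X → ℝ such that F agrees with f on S and |F(x) − F(y)| ≤ α(dist(x,y)) for all x, y ∈ X. -/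
/-- McShane extension with a modulus of continuity: a real-valued
function with modulus `α` on a nonempty subset `S` of a metric space extends to
the whole space with the same modulus. -/
theorem mcshane_extension_modulus
    {X : Type*} [MetricSpace X] (S : Set X) (hS : S.Nonempty)
    (f : X → ℝ) (α : ℝ → ℝ)
    (hαmono : Monotone α)
    (hαsub : ∀ s t : ℝ, 0 ≤ s → 0 ≤ t → α (s + t) ≤ α s + α t)
    (hα0 : α 0 = 0)
    (hf : ∀ x ∈ S, ∀ y ∈ S, |f x - f y| ≤ α (dist x y)) :
    ∃ F : X → ℝ, (∀ x ∈ S, F x = f x) ∧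
      ∀ x y : X, |F x - F y| ≤ α (dist x y) := by
  have : Nonempty S := hS.to_subtype
  have tri : ∀ x y z : X, α (dist x z) ≤ α (dist x y) + α (dist y z) := fun x y z =>
    (hαmono (dist_triangle x y z)).trans (hαsub _ _ dist_nonneg dist_nonneg)
  have bdd : ∀ x : X, BddBelow (Set.range fun s : S => f s + α (dist x s)) := by
    intro x
    obtain ⟨s0, h0⟩ := hS
    refine ⟨f s0 - α (dist s0 x), ?_⟩
    rintro _ ⟨⟨s, hs⟩, rfl⟩
    have h1 := (abs_le.mp (hf s0 h0 s hs)).2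
    have h2 := tri s0 x s
    simp only
    linarith
  have key : ∀ x y : X, (⨅ s : S, (f s + α (dist x s))) - α (dist x y)
      ≤ ⨅ s : S, (f s + α (dist y s)) := by
    intro x y
    refine le_ciInf fun s => ?_
    have h1 := ciInf_le (bdd x) s
    have h2 := tri x y s
    linarith
  refine ⟨fun x => ⨅ s : S, (f s + α (dist x s)), ?_, ?_⟩
  · intro x hx
    apply le_antisymm
    · have h1 := ciInf_le (bdd x) ⟨x, hx⟩
      simpa [hα0] using h1
    · refine le_ciInf fun s => ?_
      have h1 := (abs_le.mp (hf x hx s s.2)).2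
      linarith
  · intro x y
    have h1 := key x y
    have h2 := key y x
    rw [dist_comm y x] at h2
    rw [abs_le]
    constructor <;> simp only <;> linarith
end
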